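/- For every irrational α ∈ ℝ/ℤ and every f ∈ F¹_α, the C¹-conjugacy class C¹(f) = {h∘f∘h⁻¹ : h a C¹-diffeomorphism of S¹} is dense in F¹_α for the C¹ topology; that is, for every g ∈ F¹_α and every ε > 0 there exists a C¹-diffeomorphism h of S¹ such that the C¹ distance between h∘f∘h⁻¹ and g is less than ε. -/

import Mathlib

open Set Filter

/-- `inArc a w b` : the point `w` (mod 1) lies strictly inside the positively oriented
open arc of the circle `ℝ/ℤ` from `a` (mod 1) to `b` (mod 1). -/
def inArc (a w b : ℝ) : Prop :=
  0 < Int.fract (w - a) ∧ Int.fract (w - a) < Int.fract (b - a)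

/-- A lift of an orientation-preserving `C¹`-diffeomorphism of the circle `S¹ = ℝ/ℤ`:
a `C¹` map `F : ℝ → ℝ` with `F (x+1) = F x + 1` and `F' > 0` everywhere. -/
structure CircleDiffeo where
  toFun : ℝ → ℝ
  contDiff : ContDiff ℝ 1 toFun
  deriv_pos : ∀ x : ℝ, 0 < deriv toFun x
  commute_translation : ∀ x : ℝ, toFun (x + 1) = toFun x + 1

/-- `f` has rotation number (a lift of) `α`. -/
def hasRotationNumber (f : CircleDiffeo) (α : ℝ) : Prop :=
  Tendsto (fun n : ℕ => f.toFun^[n] 0 / (n : ℝ)) atTop (nhds α)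

/-- The `C¹`-distance between (lifts of) circle maps : sup distance between the maps
plus sup distance between the derivatives (computed over a fundamental domain). -/
noncomputable def distC1 (f g : ℝ → ℝ) : ℝ :=
  (⨆ x : Icc (0:ℝ) 1, |f x.1 - g x.1|) + (⨆ x : Icc (0:ℝ) 1, |deriv f x.1 - deriv g x.1|)

/-! ### Diophantine preliminaries -/

theorem aux_mul_sub_pos {α : ℝ} (hα : Irrational α) {m : ℕ} (hm : 1 ≤ m) (k : ℤ) :
    0 < |(m : ℝ) * α - k| := by
  rw [abs_pos, sub_ne_zero]
  exact (hα.natCast_mul (by omega)).ne_int k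

theorem dioph_lower {α : ℝ} (hα : Irrational α) (M : ℕ) :
    ∃ δ : ℝ, 0 < δ ∧ δ < 1 ∧ ∀ m : ℕ, 1 ≤ m → m ≤ M → ∀ k : ℤ, δ ≤ |(m : ℝ) * α - k| := by
  induction M with
  | zero => exact ⟨1/2, by norm_num, by norm_num, fun m h1 h2 => by omega⟩
  | succ M ih =>
    obtain ⟨δ, h0, h1, h⟩ := ih
    refine ⟨min δ |((M + 1 : ℕ) : ℝ) * α - round (((M + 1 : ℕ) : ℝ) * α)|,
      lt_min h0 (aux_mul_sub_pos hα (by omega) _), (min_le_left _ _).trans_lt h1, ?_⟩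
    intro m hm1 hm2 k
    rcases Nat.lt_or_ge M m with hlt | hge
    · have : m = M + 1 := by omega
      subst this
      exact (min_le_right _ _).trans (round_le _ k)
    · exact (min_le_left _ _).trans (h m hm1 hge k)

theorem dioph_upper (α : ℝ) {l : ℝ} (hl : 0 < l) :
    ∃ q : ℕ, 1 ≤ q ∧ ∃ p : ℤ, |(q : ℝ) * α - p| < l := by
  obtain ⟨n, hn⟩ := exists_nat_one_div_lt hl
  obtain ⟨k, hk0, _, hk⟩ := Real.exists_nat_abs_mul_sub_round_le α (n := n + 1) (by omega)
  refine ⟨k, hk0, _, hk.trans_lt (lt_of_le_of_lt ?_ hn)⟩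
  push_cast
  gcongr
  linarith

/-- infinitely many closest return times -/
theorem closest_return {α : ℝ} (hα : Irrational α) (N : ℕ) :
    ∃ n : ℕ, N < n ∧ ∃ p : ℤ, |(n : ℝ) * α - p| < 1 ∧
      ∀ m : ℕ, 1 ≤ m → m < n → ∀ k : ℤ, |(n : ℝ) * α - p| < |(m : ℝ) * α - k| := by
  classical
  obtain ⟨δ, h0, h1, h⟩ := dioph_lower hα N
  have hex : ∃ q : ℕ, 1 ≤ q ∧ ∃ p : ℤ, |(q : ℝ) * α - p| < δ := dioph_upper α h0
  obtain ⟨hn1, p, hp⟩ := Nat.find_spec hex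
  refine ⟨Nat.find hex, ?_, p, hp.trans h1, ?_⟩
  · by_contra hcon
    exact absurd hp (not_lt.2 (h _ hn1 (not_lt.1 hcon) p))
  · intro m hm1 hm2 k
    have := Nat.find_min hex hm2
    push Not at this
    exact hp.trans_le (this hm1 k)

/-! ### Semiconjugacies to the rotation -/

theorem deg1_add_int {H : ℝ → ℝ} (h1 : ∀ x, H (x + 1) = H x + 1) (x : ℝ) (k : ℤ) :
    H (x + k) = H x + k := by
  induction k using Int.induction_on generalizing x with
  | zero => simp
  | succ n ih =>
    have := ih (x + 1)
    rw [h1] at this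
    push_cast at this ⊢
    rw [← add_assoc, add_right_comm, this]; ring
  | pred n ih =>
    have := ih (x - 1)
    have h2 := h1 (x - 1)
    rw [sub_add_cancel] at h2
    push_cast at this ⊢
    rw [show x + (-(n : ℝ) - 1) = x - 1 + -(n : ℝ) by ring, this]
    linarith

theorem semi_iter {F H : ℝ → ℝ} {α : ℝ} (hs : ∀ x, H (F x) = H x + α) (n : ℕ) (x : ℝ) :
    H (F^[n] x) = H x + n * α := by
  induction n with
  | zero => simp
  | succ n ih => rw [Function.iterate_succ_apply', hs, ih]; push_cast; ring

theorem lemD {F H : ℝ → ℝ} {α : ℝ} (hF : Monotone F) (hH : Monotone H)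
    (h1 : ∀ x, H (x + 1) = H x + 1) (hs : ∀ x, H (F x) = H x + α) {x y : ℝ} (hxy : x ≤ y)
    (n : ℕ) (hl1 : H y - H x < 1)
    (hn : ∀ m : ℕ, 1 ≤ m → m < n → ∀ k : ℤ, H y - H x < |(m : ℝ) * α - k|) :
    ∑ i ∈ Finset.range n, (F^[i] y - F^[i] x) ≤ 1 := by
  have hle : ∀ i, F^[i] x ≤ F^[i] y := fun i => hF.iterate i hxy
  have key : ∀ i < n, ∀ j < n, ∀ (k : ℤ) (t : ℝ), t ∈ Ioo (F^[i] x) (F^[i] y) →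
      t + k ∈ Ioo (F^[j] x) (F^[j] y) → i = j ∧ k = 0 := by
    intro i hi j hj k t ht htk
    have a1 := hH ht.1.le
    have a2 := hH ht.2.le
    have a3 := hH htk.1.le
    have a4 := hH htk.2.le
    rw [semi_iter hs] at a1 a2 a3 a4
    rw [deg1_add_int h1] at a3 a4
    rcases lt_trichotomy i j with hij | hij | hij
    · exfalso
      have := hn (j - i) (by omega) (by omega) k
      rw [Nat.cast_sub hij.le, lt_abs] at this
      rcases this with h | h <;> nlinarith
    · refine ⟨hij, ?_⟩
      subst hij
      have b1 : (k : ℝ) < 1 := by linarith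
      have b2 : (-1 : ℝ) < k := by linarith
      have b1 : k < 1 := by exact_mod_cast b1
      have b2 : -1 < k := by exact_mod_cast b2
      omega
    · exfalso
      have := hn (i - j) (by omega) (by omega) (-k)
      rw [Nat.cast_sub hij.le, lt_abs] at this
      push_cast at this
      rcases this with h | h <;> nlinarith
  set s : Set ℝ := ⋃ i ∈ Finset.range n, Ioo (F^[i] x) (F^[i] y) with hsdef
  have hvol : MeasureTheory.volume s =
      ENNReal.ofReal (∑ i ∈ Finset.range n, (F^[i] y - F^[i] x)) := by
    rw [hsdef, MeasureTheory.measure_biUnion_finset]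
    · simp only [Real.volume_Ioo]
      rw [ENNReal.ofReal_sum_of_nonneg]
      intro i _
      exact sub_nonneg.2 (hle i)
    · intro i hi j hj hij
      refine Set.disjoint_left.2 fun t ht ht' => hij ?_
      exact (key i (by simpa using hi) j (by simpa using hj) 0 t ht (by simpa using ht')).1
    · intro i _
      exact measurableSet_Ioo
  by_contra hcon
  push Not at hcon
  have hlt : MeasureTheory.volume (Ioc (0 : ℝ) (0 + 1)) < MeasureTheory.volume s := by
    rw [hvol, Real.volume_Ioc]
    exact (ENNReal.ofReal_lt_ofReal_iff (by linarith)).2 (by linarith)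
  have hmeas : MeasurableSet s :=
    Finset.measurableSet_biUnion _ fun i _ => measurableSet_Ioo
  obtain ⟨a, b, hab, hdis⟩ := MeasureTheory.exists_pair_mem_lattice_not_disjoint_vadd
    (isAddFundamentalDomain_Ioc (T := (1 : ℝ)) one_pos 0) hmeas.nullMeasurableSet hlt
  rw [Set.not_disjoint_iff] at hdis
  obtain ⟨t, ⟨u, hu, hut⟩, ⟨v, hv, hvt⟩⟩ := hdis
  obtain ⟨a, ka, rfl⟩ := a
  obtain ⟨b, kb, rfl⟩ := b
  simp only [hsdef, Set.mem_iUnion, Finset.mem_range] at hu hv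
  obtain ⟨i, hi, hu⟩ := hu
  obtain ⟨j, hj, hv⟩ := hv
  have huv : u + ((ka - kb : ℤ) : ℝ) = v := by
    have h1 : (ka : ℝ) + u = t := by simpa [AddSubgroup.vadd_def] using hut
    have h2 : (kb : ℝ) + v = t := by simpa [AddSubgroup.vadd_def] using hvt
    push_cast
    linarith
  have := (key i hi j hj (ka - kb) u hu (by rw [huv]; exact hv)).2
  apply hab
  have : ka = kb := by omega
  subst this
  rfl

theorem hitting {F H : ℝ → ℝ} {α : ℝ} (hα : Irrational α) (hs : ∀ x, H (F x) = H x + α)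
    {l : ℝ} (hl : 0 < l) :
    ∃ N : ℕ, ∀ x y : ℝ, ∃ j ≤ N, ∃ k : ℤ, |H (F^[j] x) - H y - k| < l := by
  obtain ⟨q, hq, p, hp⟩ := dioph_upper α hl
  have hpos := aux_mul_sub_pos hα hq p
  set d := (q : ℝ) * α - p with hd
  refine ⟨q * ⌈1 / |d|⌉₊, fun x y => ?_⟩
  have main : ∀ t : ℝ, ∃ j : ℕ, j ≤ ⌈1 / |d|⌉₊ ∧ |(j : ℝ) * |d| - Int.fract t| < l := by
    intro t
    refine ⟨⌊Int.fract t / |d|⌋₊, ?_, ?_⟩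
    · refine (Nat.floor_le_ceil _).trans (Nat.ceil_le_ceil ?_)
      gcongr
      exact (Int.fract_lt_one t).le
    · have h0 : 0 ≤ Int.fract t / |d| := div_nonneg (Int.fract_nonneg t) hpos.le
      have a1 := Nat.floor_le h0
      have a2 := Nat.lt_floor_add_one (Int.fract t / |d|)
      rw [le_div_iff₀ hpos] at a1
      rw [div_lt_iff₀ hpos] at a2
      rw [abs_lt]
      constructor <;> linarith
  rcases le_or_gt 0 d with h0 | h0
  · obtain ⟨j, hj, hjt⟩ := main (H y - H x)
    refine ⟨q * j, Nat.mul_le_mul le_rfl hj, j * p - ⌊H y - H x⌋, ?_⟩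
    rw [semi_iter hs]
    rw [abs_of_nonneg h0] at hjt
    convert hjt using 2
    unfold Int.fract
    push_cast
    rw [hd]; ring
  · obtain ⟨j, hj, hjt⟩ := main (-(H y - H x))
    refine ⟨q * j, Nat.mul_le_mul le_rfl hj, j * p + ⌊-(H y - H x)⌋, ?_⟩
    rw [semi_iter hs]
    rw [abs_of_neg h0, abs_sub_comm] at hjt
    convert hjt using 2
    unfold Int.fract
    push_cast
    rw [hd]; ring

/-! ### Uniform control of Birkhoff sums -/

theorem periodic_bdd {φ : ℝ → ℝ} (hc : Continuous φ) (hp : ∀ x, φ (x + 1) = φ x) :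
    ∃ C : ℝ, 0 < C ∧ ∀ x, |φ x| ≤ C := by
  obtain ⟨C, hC⟩ := isCompact_Icc.exists_bound_of_continuousOn (s := Icc (0 : ℝ) 1) hc.continuousOn
  refine ⟨max C 1, lt_max_of_lt_right one_pos, fun x => ?_⟩
  obtain ⟨y, hy, hxy⟩ := Function.Periodic.exists_mem_Ico₀ (f := φ) (c := 1) hp one_pos x
  rw [hxy]
  exact (hC y ⟨hy.1, hy.2.le⟩).trans (le_max_left _ _)

theorem periodic_unif {φ : ℝ → ℝ} (hc : Continuous φ) (hp : ∀ x, φ (x + 1) = φ x)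
    {ε : ℝ} (hε : 0 < ε) :
    ∃ δ : ℝ, 0 < δ ∧ δ < 1 ∧ ∀ x y, |x - y| < δ → |φ x - φ y| < ε := by
  have hu := isCompact_Icc.uniformContinuousOn_of_continuous (s := Icc (-1 : ℝ) 2) hc.continuousOn
  rw [Metric.uniformContinuousOn_iff] at hu
  obtain ⟨δ, hδ, h⟩ := hu ε hε
  refine ⟨min δ (1/2), lt_min hδ (by norm_num), (min_le_right _ _).trans_lt (by norm_num), ?_⟩
  intro x y hxy
  have hpp : ∀ z, φ z = φ (z - ⌊x⌋) := fun z =>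
    (Function.Periodic.sub_int_mul_eq (f := φ) (c := 1) hp ⌊x⌋ (x := z)).symm.trans (by simp)
  rw [hpp x, hpp y]
  have h1 := Int.floor_le x
  have h2 := Int.lt_floor_add_one x
  have hxy2 := hxy.trans_le (min_le_right _ _)
  have hxy1 := hxy.trans_le (min_le_left _ _)
  rw [abs_lt] at hxy2
  have := h (x - ⌊x⌋) ⟨by linarith, by linarith⟩ (y - ⌊x⌋)
    ⟨by linarith, by linarith⟩ (by rw [Real.dist_eq, sub_sub_sub_cancel_right]; exact hxy1)
  rwa [Real.dist_eq] at this

theorem periodic_sum {F φ : ℝ → ℝ} (h1F : ∀ x, F (x + 1) = F x + 1)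
    (hp : ∀ x, φ (x + 1) = φ x) (n : ℕ) (x : ℝ) (k : ℤ) :
    birkhoffSum F φ n (x + k) = birkhoffSum F φ n x := by
  have hit : ∀ i x, F^[i] (x + 1) = F^[i] x + 1 := by
    intro i x
    induction i with
    | zero => simp
    | succ i ih => rw [Function.iterate_succ_apply', ih, h1F, Function.iterate_succ_apply']
  unfold birkhoffSum
  refine Finset.sum_congr rfl fun i _ => ?_
  rw [deg1_add_int (hit i)]
  simpa using (Function.Periodic.int_mul (f := φ) (c := 1) hp k) (F^[i] x)

theorem birkhoff_close {F H φ : ℝ → ℝ} {α : ℝ} (hα : Irrational α) (hF : Monotone F)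
    (h1F : ∀ x, F (x + 1) = F x + 1) (hH : Monotone H)
    (h1 : ∀ x, H (x + 1) = H x + 1) (hs : ∀ x, H (F x) = H x + α)
    (hc : Continuous φ) (hp : ∀ x, φ (x + 1) = φ x) {ε : ℝ} (hε : 0 < ε) :
    ∃ n : ℕ, 1 ≤ n ∧ ∀ x y, |birkhoffSum F φ n x - birkhoffSum F φ n y| ≤ ε * n := by
  obtain ⟨C, hC0, hC⟩ := periodic_bdd hc hp
  obtain ⟨δ, hδ, -, hu⟩ := periodic_unif hc hp (show 0 < ε / 3 by positivity)
  have hlin : ∀ a b, |φ a - φ b| ≤ ε / 3 + 2 * C / δ * |a - b| := by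
    intro a b
    rcases lt_or_ge |a - b| δ with h | h
    · have := hu a b h
      have : 0 ≤ 2 * C / δ * |a - b| := by positivity
      linarith
    · have h2 : |φ a - φ b| ≤ 2 * C := by
        have := abs_sub (φ a) (φ b)
        linarith [hC a, hC b]
      have : 2 * C ≤ 2 * C / δ * |a - b| := by
        rw [div_mul_eq_mul_div, le_div_iff₀ hδ]
        gcongr
      linarith
  obtain ⟨M, hM⟩ := exists_nat_gt (max 1 (2 * C / δ / (ε / 3)))
  have hM1 : (1 : ℝ) < M := (le_max_left _ _).trans_lt hM
  have hM2 : 2 * C / δ ≤ ε / 3 * M := by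
    have := (le_max_right 1 (2 * C / δ / (ε / 3))).trans_lt hM
    rw [div_lt_iff₀ (by positivity)] at this
    linarith
  obtain ⟨l, hl0, hl1, hl⟩ := dioph_lower hα M
  have block : ∀ x y, x ≤ y → H y - H x < l →
      |birkhoffSum F φ M x - birkhoffSum F φ M y| ≤ 2 * (ε / 3) * M := by
    intro x y hxy hd
    have hD := lemD hF hH h1 hs hxy M (hd.trans hl1)
      (fun m h1 h2 k => hd.trans_le (hl m h1 h2.le k))
    unfold birkhoffSum
    rw [← Finset.sum_sub_distrib]
    calc |∑ i ∈ Finset.range M, (φ (F^[i] x) - φ (F^[i] y))|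
        ≤ ∑ i ∈ Finset.range M, |φ (F^[i] x) - φ (F^[i] y)| := Finset.abs_sum_le_sum_abs _ _
      _ ≤ ∑ i ∈ Finset.range M, (ε / 3 + 2 * C / δ * (F^[i] y - F^[i] x)) := by
          refine Finset.sum_le_sum fun i _ => ?_
          have := hlin (F^[i] x) (F^[i] y)
          rwa [abs_sub_comm (F^[i] x), abs_of_nonneg (sub_nonneg.2 (hF.iterate i hxy))] at this
      _ = M * (ε / 3) + 2 * C / δ * ∑ i ∈ Finset.range M, (F^[i] y - F^[i] x) := by
          rw [Finset.sum_add_distrib, ← Finset.mul_sum]; simp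
      _ ≤ M * (ε / 3) + 2 * C / δ * 1 := by gcongr
      _ ≤ 2 * (ε / 3) * M := by linarith
  have blocks : ∀ (B : ℕ) x y, x ≤ y → H y - H x < l →
      |birkhoffSum F φ (M * B) x - birkhoffSum F φ (M * B) y| ≤ 2 * (ε / 3) * (M * B) := by
    intro B
    induction B with
    | zero => intro x y _ _; simp
    | succ B ih =>
      intro x y hxy hd
      rw [Nat.mul_succ, birkhoffSum_add, birkhoffSum_add]
      have a := ih x y hxy hd
      have b := block (F^[M * B] x) (F^[M * B] y) (hF.iterate _ hxy)
        (by rw [semi_iter hs, semi_iter hs]; linarith)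
      rw [abs_le] at a b ⊢
      push_cast
      constructor <;> linarith
  have blocks' : ∀ (B : ℕ) x y, |H x - H y| < l →
      |birkhoffSum F φ (M * B) x - birkhoffSum F φ (M * B) y| ≤ 2 * (ε / 3) * (M * B) := by
    intro B x y h
    rw [abs_lt] at h
    rcases le_total x y with hxy | hxy
    · exact blocks B x y hxy (by linarith)
    · rw [abs_sub_comm]
      exact blocks B y x hxy (by linarith)
  obtain ⟨N, hN⟩ := hitting hα hs hl0
  obtain ⟨B, hB⟩ := exists_nat_gt (max 1 (N * (2 * C) / (ε / 3)))
  have hB1 : (1 : ℝ) < B := (le_max_left _ _).trans_lt hB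
  have hB2 : N * (2 * C) ≤ ε / 3 * B := by
    have := (le_max_right 1 (N * (2 * C) / (ε / 3))).trans_lt hB
    rw [div_lt_iff₀ (by positivity)] at this
    linarith
  have hMn : 1 < M := by exact_mod_cast hM1
  have hBn : 1 < B := by exact_mod_cast hB1
  refine ⟨M * B, Nat.mul_pos (by omega) (by omega), fun x y => ?_⟩
  obtain ⟨j, hj, k, hk⟩ := hN x y
  have shift : ∀ n j x, |birkhoffSum F φ n (F^[j] x) - birkhoffSum F φ n x| ≤ j * (2 * C) := by
    intro n j x
    induction j with
    | zero => simp
    | succ j ih =>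
      have e := birkhoffSum_apply_sub_birkhoffSum F φ n (F^[j] x)
      rw [Function.iterate_succ_apply']
      have c1 := hC (F^[n] (F^[j] x))
      have c2 := hC (F^[j] x)
      rw [abs_le] at ih c1 c2 ⊢
      push_cast
      constructor <;> linarith
  have e1 := shift (M * B) j x
  have e2 := blocks' B (F^[j] x) (y + k) (by
    rw [deg1_add_int h1]; convert hk using 2; ring)
  rw [periodic_sum h1F hp] at e2
  have e3 : (j : ℝ) * (2 * C) ≤ ε / 3 * B := le_trans (by gcongr) hB2
  have e4 : ε / 3 * B ≤ ε / 3 * (M * B) := by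
    have : (B : ℝ) ≤ M * B := by nlinarith
    gcongr
  push_cast
  rw [abs_le] at e1 e2 ⊢
  constructor <;> linarith

/-! ### Constructing circle diffeomorphisms -/

theorem mkDiffeo (F F' : ℝ → ℝ) (hd : ∀ x, HasDerivAt F (F' x) x) (hc : Continuous F')
    (hpos : ∀ x, 0 < F' x) (h1 : ∀ x, F (x + 1) = F x + 1) :
    ∃ c : CircleDiffeo, c.toFun = F ∧ ∀ x, deriv c.toFun x = F' x := by
  have e : deriv F = F' := funext fun x => (hd x).deriv
  exact ⟨⟨F, contDiff_one_iff_deriv.2 ⟨fun x => (hd x).differentiableAt, by rw [e]; exact hc⟩,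
    fun x => by rw [e]; exact hpos x, h1⟩, rfl, fun x => (hd x).deriv⟩

namespace CircleDiffeo

theorem hasDerivAt (f : CircleDiffeo) (x : ℝ) : HasDerivAt f.toFun (deriv f.toFun x) x :=
  ((contDiff_one_iff_deriv.1 f.contDiff).1 x).hasDerivAt

theorem continuous_deriv (f : CircleDiffeo) : Continuous (deriv f.toFun) :=
  (contDiff_one_iff_deriv.1 f.contDiff).2

theorem continuous (f : CircleDiffeo) : Continuous f.toFun := f.contDiff.continuous

theorem strictMono (f : CircleDiffeo) : StrictMono f.toFun :=
  strictMono_of_deriv_pos f.deriv_pos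

theorem deriv_periodic (f : CircleDiffeo) (x : ℝ) : deriv f.toFun (x + 1) = deriv f.toFun x := by
  have h1 : HasDerivAt (fun y => f.toFun (y + 1)) (deriv f.toFun (x + 1)) x :=
    (f.hasDerivAt (x + 1)).comp_add_const x 1
  have h2 : HasDerivAt (fun y => f.toFun (y + 1)) (deriv f.toFun x) x := by
    simp only [f.commute_translation]
    exact (f.hasDerivAt x).add_const 1
  exact h1.unique h2

/-- The associated degree one lift. -/
noncomputable def lift (f : CircleDiffeo) : CircleDeg1Lift :=
  ⟨⟨f.toFun, f.strictMono.monotone⟩, f.commute_translation⟩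

theorem lift_apply (f : CircleDiffeo) (x : ℝ) : f.lift x = f.toFun x := rfl

theorem surjective (f : CircleDiffeo) : Function.Surjective f.toFun :=
  f.lift.continuous_iff_surjective.1 f.continuous

theorem bijective (f : CircleDiffeo) : Function.Bijective f.toFun :=
  ⟨f.strictMono.injective, f.surjective⟩

theorem translationNumber_lift {f : CircleDiffeo} {α : ℝ} (h : hasRotationNumber f α) :
    f.lift.translationNumber = α :=
  f.lift.translationNumber_eq_of_tendsto₀ h

theorem exists_conj (h f : CircleDiffeo) : ∃ c : CircleDiffeo,
    (∀ x, c.toFun (h.toFun x) = h.toFun (f.toFun x)) ∧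
    ∀ x, deriv c.toFun (h.toFun x) =
      deriv h.toFun (f.toFun x) * deriv f.toFun x / deriv h.toFun x := by
  let e : ℝ ≃o ℝ := h.strictMono.orderIsoOfSurjective h.toFun h.surjective
  have he : ∀ x, e x = h.toFun x := fun x => rfl
  have hk : Continuous e.symm := e.symm.continuous
  have hl : ∀ x, e.symm (h.toFun x) = x := fun x => e.symm_apply_apply x
  have hr : ∀ x, h.toFun (e.symm x) = x := fun x => e.apply_symm_apply x
  have hdk : ∀ y, HasDerivAt e.symm (deriv h.toFun (e.symm y))⁻¹ y := fun y =>
    HasDerivAt.of_local_left_inverse hk.continuousAt (h.hasDerivAt _) (h.deriv_pos _).ne'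
      (Filter.Eventually.of_forall hr)
  have hk1 : ∀ y, e.symm (y + 1) = e.symm y + 1 := fun y => by
    apply h.strictMono.injective
    rw [hr, h.commute_translation, hr]
  obtain ⟨c, hc, hc'⟩ := mkDiffeo (fun y => h.toFun (f.toFun (e.symm y)))
    (fun y => deriv h.toFun (f.toFun (e.symm y)) *
      (deriv f.toFun (e.symm y) * (deriv h.toFun (e.symm y))⁻¹))
    (fun y => (h.hasDerivAt _).comp y ((f.hasDerivAt _).comp y (hdk y)))
    (by
      refine (h.continuous_deriv.comp (f.continuous.comp hk)).mul
        ((f.continuous_deriv.comp hk).mul ((h.continuous_deriv.comp hk).inv₀ ?_))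
      exact fun y => (h.deriv_pos _).ne')
    (fun y => mul_pos (h.deriv_pos _) (mul_pos (f.deriv_pos _) (inv_pos.2 (h.deriv_pos _))))
    (fun y => by
      show h.toFun (f.toFun (e.symm (y + 1))) = _
      rw [hk1, f.commute_translation, h.commute_translation])
  refine ⟨c, fun x => ?_, fun x => ?_⟩
  · rw [hc]
    simp only [hl]
  · rw [hc', hl]
    field_simp

theorem exists_comp (h k : CircleDiffeo) : ∃ c : CircleDiffeo,
    ∀ x, c.toFun x = h.toFun (k.toFun x) := by
  obtain ⟨c, hc, _⟩ := mkDiffeo (fun y => h.toFun (k.toFun y))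
    (fun y => deriv h.toFun (k.toFun y) * deriv k.toFun y)
    (fun y => (h.hasDerivAt _).comp y (k.hasDerivAt y))
    ((h.continuous_deriv.comp k.continuous).mul k.continuous_deriv)
    (fun y => mul_pos (h.deriv_pos _) (k.deriv_pos _))
    (fun y => by simp only [k.commute_translation, h.commute_translation])
  exact ⟨c, fun x => by rw [hc]⟩

/-- Semiconjugacy to the rotation. -/
theorem exists_semiconj {f : CircleDiffeo} {α : ℝ} (h : f.lift.translationNumber = α) :
    ∃ H : ℝ → ℝ, Monotone H ∧ (∀ x, H (x + 1) = H x + 1) ∧ ∀ x, H (f.toFun x) = H x + α := by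
  have hb : Function.Bijective
      ((CircleDeg1Lift.translate (Multiplicative.ofAdd α) : CircleDeg1Liftˣ) : CircleDeg1Lift) :=
    CircleDeg1Lift.isUnit_iff_bijective.1 (Units.isUnit _)
  obtain ⟨H, hH⟩ := CircleDeg1Lift.semiconj_of_bijective_of_translationNumber_eq
    (f₁ := f.lift) f.bijective hb (by rw [h, CircleDeg1Lift.translationNumber_translate])
  refine ⟨H, H.monotone, H.map_add_one, fun x => ?_⟩
  have := hH x
  rw [CircleDeg1Lift.translate_apply, lift_apply] at this
  rw [this, add_comm]

theorem iter_deriv (f : CircleDiffeo) (n : ℕ) (x : ℝ) :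
    HasDerivAt f.toFun^[n]
      (Real.exp (birkhoffSum f.toFun (fun y => Real.log (deriv f.toFun y)) n x)) x := by
  induction n with
  | zero => simpa using hasDerivAt_id x
  | succ n ih =>
    rw [Function.iterate_succ', birkhoffSum_succ, Real.exp_add, Real.exp_log (f.deriv_pos _),
      mul_comm]
    exact (f.hasDerivAt _).comp x ih

theorem continuous_log_deriv (f : CircleDiffeo) :
    Continuous (fun y => Real.log (deriv f.toFun y)) :=
  f.continuous_deriv.log fun y => (f.deriv_pos y).ne'

theorem subexp {f : CircleDiffeo} {α : ℝ} (hα : Irrational α)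
    (h : f.lift.translationNumber = α) {ε : ℝ} (hε : 0 < ε) :
    ∃ n : ℕ, 1 ≤ n ∧ ∀ x,
      |birkhoffSum f.toFun (fun y => Real.log (deriv f.toFun y)) n x| ≤ ε * n := by
  obtain ⟨H, hH, h1, hs⟩ := exists_semiconj h
  obtain ⟨n, hn, hb⟩ := birkhoff_close hα f.strictMono.monotone f.commute_translation hH h1 hs
    f.continuous_log_deriv (fun x => by rw [f.deriv_periodic]) hε
  refine ⟨n, hn, fun x => ?_⟩
  obtain ⟨c, -, hc⟩ := exists_hasDerivAt_eq_slope f.toFun^[n] _ (a := 0) (b := 1) one_pos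
    (f.continuous.iterate n).continuousOn (fun x _ => f.iter_deriv n x)
  have hit : f.toFun^[n] 1 = f.toFun^[n] 0 + 1 := by
    have := (f.lift ^ n).map_add_one 0
    rw [CircleDeg1Lift.coe_pow] at this
    simpa using! this
  rw [hit] at hc
  have hc : Real.exp (birkhoffSum f.toFun (fun y => Real.log (deriv f.toFun y)) n c) = 1 := by
    rw [hc]; ring
  rw [Real.exp_eq_one_iff] at hc
  have := hb x c
  rwa [hc, sub_zero] at this

/-- The trick of Navas: every diffeomorphism with irrational rotation number can be conjugated
close to the rotation. -/
theorem near_rotation {f : CircleDiffeo} {α : ℝ} (hα : Irrational α)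
    (h : f.lift.translationNumber = α) {ε : ℝ} (hε : 0 < ε) :
    ∃ k r : CircleDiffeo, (∀ x, r.toFun (k.toFun x) = k.toFun (f.toFun x)) ∧
      (∀ x, |Real.log (deriv r.toFun x)| ≤ ε) ∧ (∀ x, |r.toFun x - (x + α)| ≤ Real.exp ε - 1) := by
  obtain ⟨n, hn, hS⟩ := subexp hα h hε
  set φ : ℝ → ℝ := fun y => Real.log (deriv f.toFun y) with hφ
  have hn0 : (0 : ℝ) < n := by exact_mod_cast hn
  set v : ℝ → ℝ := fun x => (∑ i ∈ Finset.range n, birkhoffSum f.toFun φ i x) / n with hv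
  have hScont : ∀ i, Continuous (birkhoffSum f.toFun φ i) := by
    intro i
    unfold birkhoffSum
    exact continuous_finsetSum _ fun j _ => f.continuous_log_deriv.comp (f.continuous.iterate j)
  have hvc : Continuous v :=
    (continuous_finsetSum _ fun i _ => hScont i).div_const _
  have hφp : ∀ x, φ (x + 1) = φ x := fun x => by simp only [hφ, f.deriv_periodic]
  have hvp : ∀ x, v (x + 1) = v x := fun x => by
    simp only [hv]
    congr 1
    refine Finset.sum_congr rfl fun i _ => ?_
    simpa using periodic_sum f.commute_translation hφp i x 1
  have hcob : ∀ x, v (f.toFun x) - v x + φ x = birkhoffSum f.toFun φ n x / n := by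
    intro x
    have : ∀ m : ℕ, ∑ i ∈ Finset.range m, birkhoffSum f.toFun φ i (f.toFun x)
        - ∑ i ∈ Finset.range m, birkhoffSum f.toFun φ i x + m * φ x
        = birkhoffSum f.toFun φ m x := by
      intro m
      induction m with
      | zero => simp
      | succ m ih =>
        rw [Finset.sum_range_succ, Finset.sum_range_succ, birkhoffSum_succ' f.toFun φ m x]
        push_cast
        linarith
    rw [← this n]
    simp only [hv]
    field_simp
  have hec : Continuous fun t => Real.exp (v t) := Real.continuous_exp.comp hvc
  set I : ℝ := ∫ t in (0 : ℝ)..1, Real.exp (v t) with hI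
  have hI0 : 0 < I := intervalIntegral.intervalIntegral_pos_of_pos
    (hec.intervalIntegrable _ _) (fun t => Real.exp_pos _) one_pos
  obtain ⟨k, hk, hk'⟩ := mkDiffeo (fun x => (∫ t in (0 : ℝ)..x, Real.exp (v t)) / I)
    (fun x => Real.exp (v x) / I)
    (fun x => (hec.integral_hasStrictDerivAt 0 x).hasDerivAt.div_const I)
    (hec.div_const _) (fun x => div_pos (Real.exp_pos _) hI0)
    (fun x => by
      have e1 := intervalIntegral.integral_add_adjacent_intervals
        (hec.intervalIntegrable (μ := MeasureTheory.volume) 0 x)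
        (hec.intervalIntegrable (μ := MeasureTheory.volume) x (x + 1))
      have e2 := Function.Periodic.intervalIntegral_add_eq
        (f := fun t => Real.exp (v t)) (T := 1) (fun t => by simp only [hvp]) x 0
      rw [zero_add] at e2
      rw [← e1, e2, add_div, div_self hI0.ne'])
  obtain ⟨r, hr, hr'⟩ := exists_conj k f
  have hlog : ∀ x, |Real.log (deriv r.toFun x)| ≤ ε := by
    intro y
    obtain ⟨x, rfl⟩ := k.surjective y
    have e : Real.log (deriv r.toFun (k.toFun x)) = v (f.toFun x) - v x + φ x := by
      rw [hr', Real.log_div (mul_pos (k.deriv_pos _) (f.deriv_pos _)).ne' (k.deriv_pos _).ne',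
        Real.log_mul (k.deriv_pos _).ne' (f.deriv_pos _).ne', hk', hk',
        Real.log_div (Real.exp_pos _).ne' hI0.ne', Real.log_div (Real.exp_pos _).ne' hI0.ne',
        Real.log_exp, Real.log_exp]
      ring
    rw [e, hcob, abs_div, abs_of_pos hn0, div_le_iff₀ hn0]
    exact hS x
  refine ⟨k, r, hr, hlog, ?_⟩
  have hτ : r.lift.translationNumber = α := by
    rw [← h]
    exact (CircleDeg1Lift.translationNumber_eq_of_semiconj (f := k.lift)
      (g₁ := f.lift) (g₂ := r.lift) fun x => (hr x).symm).symm
  obtain ⟨x0, hx0⟩ := r.lift.exists_eq_add_translationNumber r.continuous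
  rw [hτ, lift_apply] at hx0
  have hder : ∀ x, |deriv r.toFun x - 1| ≤ Real.exp ε - 1 := by
    intro x
    have h1 := abs_le.1 (hlog x)
    have h2 : deriv r.toFun x ≤ Real.exp ε := (Real.log_le_iff_le_exp (r.deriv_pos x)).1 h1.2
    have h3 : Real.exp (-ε) ≤ deriv r.toFun x := (Real.le_log_iff_exp_le (r.deriv_pos x)).1 h1.1
    have h4 : 2 ≤ Real.exp ε + Real.exp (-ε) := by
      have h5 : Real.exp ε * Real.exp (-ε) = 1 := by rw [← Real.exp_add]; simp
      nlinarith [sq_nonneg (Real.exp ε - Real.exp (-ε)), Real.exp_pos ε, Real.exp_pos (-ε)]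
    rw [abs_le]
    constructor <;> linarith
  intro x
  -- bring `x` within distance one of `x0`
  have hred : ∀ z ∈ Icc x0 (x0 + 1), |r.toFun z - (z + α)| ≤ Real.exp ε - 1 := by
    intro z hz
    have hm := (convex_univ : Convex ℝ (univ : Set ℝ)).norm_image_sub_le_of_norm_hasDerivWithin_le
      (f := fun y => r.toFun y - y) (f' := fun y => deriv r.toFun y - 1) (C := Real.exp ε - 1)
      (fun y _ => ((r.hasDerivAt y).sub (hasDerivAt_id y)).hasDerivWithinAt)
      (fun y _ => hder y) (mem_univ x0) (mem_univ z)
    simp only [Real.norm_eq_abs] at hm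
    have h0 : 0 ≤ Real.exp ε - 1 := (abs_nonneg _).trans (hder 0)
    have h1 : |z - x0| ≤ 1 := by
      rw [abs_of_nonneg (by linarith [hz.1])]; linarith [hz.2]
    calc |r.toFun z - (z + α)| = |r.toFun z - z - (r.toFun x0 - x0)| := by
          rw [hx0]; congr 1; ring
      _ ≤ (Real.exp ε - 1) * |z - x0| := hm
      _ ≤ (Real.exp ε - 1) * 1 := by gcongr
      _ = _ := mul_one _
  obtain ⟨z, hz, hxz⟩ := Function.Periodic.exists_mem_Ico (f := fun y => |r.toFun y - (y + α)|)
    (c := 1) (fun y => by simp only [r.commute_translation]; congr 1; ring) one_pos x x0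
  rw [hxz]
  exact hred z ⟨hz.1, hz.2.le⟩

end CircleDiffeo

/-! ### The Denjoy theorem -/

theorem semi_continuous {F H : ℝ → ℝ} {α : ℝ} (hα : Irrational α) (hH : Monotone H)
    (h1 : ∀ x, H (x + 1) = H x + 1) (hs : ∀ x, H (F x) = H x + α) : Continuous H := by
  refine hH.continuous_of_denseRange (Metric.denseRange_iff.2 fun t l hl => ?_)
  obtain ⟨N, hN⟩ := hitting (F := fun x => x + α) (H := fun x => x) hα (fun x => rfl) hl
  obtain ⟨j, -, k, hk⟩ := hN (H 0) t
  have e := semi_iter (F := fun x => x + α) (H := fun x => x) (α := α) (fun x => rfl) j (H 0)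
  rw [e] at hk
  refine ⟨F^[j] 0 + ((-k : ℤ) : ℝ), ?_⟩
  rw [deg1_add_int h1, semi_iter hs, dist_comm, Real.dist_eq]
  convert hk using 2
  push_cast
  ring

theorem small_intervals {F H : ℝ → ℝ} {α : ℝ} (hα : Irrational α) (hF : Monotone F)
    (hH : Monotone H) (h1 : ∀ x, H (x + 1) = H x + 1) (hs : ∀ x, H (F x) = H x + α) {a b : ℝ}
    (hab : a ≤ b) (hHab : H a = H b) {c : ℝ} (hc : 0 < c) :
    ∃ N, ∀ n ≥ N, F^[n] b - F^[n] a < c := by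
  have hsum : Summable fun n => F^[n] b - F^[n] a := by
    refine summable_of_sum_range_le (c := 1) (fun n => sub_nonneg.2 (hF.iterate n hab)) fun n => ?_
    refine lemD hF hH h1 hs hab n (by rw [hHab]; simp) fun m hm _ k => ?_
    rw [hHab, sub_self]
    exact aux_mul_sub_pos hα hm k
  have := (tendsto_order.1 hsum.tendsto_atTop_zero).2 c hc
  exact eventually_atTop.1 this

theorem denjoy {g : CircleDiffeo} {α : ℝ} (hα : Irrational α) {L : ℝ} (hL : 0 < L)
    (hlip : ∀ x y, |Real.log (deriv g.toFun x) - Real.log (deriv g.toFun y)| ≤ L * |x - y|)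
    {H : ℝ → ℝ} (hH : Monotone H) (h1 : ∀ x, H (x + 1) = H x + 1)
    (hs : ∀ x, H (g.toFun x) = H x + α) : StrictMono H := by
  by_contra hcon
  have : ∃ a b, a < b ∧ H a = H b := by
    by_contra hno
    push Not at hno
    exact hcon fun a b hab => lt_of_le_of_ne (hH hab.le) (hno a b hab)
  obtain ⟨a, b, hab, hHab⟩ := this
  let e : ℝ ≃o ℝ := g.strictMono.orderIsoOfSurjective g.toFun g.surjective
  have hr : ∀ x, g.toFun (e.symm x) = x := fun x => e.apply_symm_apply x
  have hsi : ∀ x, H (e.symm x) = H x + -α := fun x => by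
    have := hs (e.symm x)
    rw [hr] at this
    linarith
  set c := (b - a) * Real.exp (-L) with hc
  have hc0 : 0 < c := mul_pos (sub_pos.2 hab) (Real.exp_pos _)
  obtain ⟨N1, hN1⟩ := small_intervals hα g.strictMono.monotone hH h1 hs hab.le hHab hc0
  obtain ⟨N2, hN2⟩ := small_intervals hα.neg e.symm.monotone hH h1 hsi hab.le hHab hc0
  obtain ⟨n, hn, p, hp1, hp⟩ := closest_return hα (max N1 N2)
  have l1 := hN1 n ((le_max_left _ _).trans hn.le)
  have l2 := hN2 n ((le_max_right _ _).trans hn.le)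
  have hinv : ∀ m x, g.toFun^[m] (e.symm^[m] x) = x := fun m x =>
    (Function.LeftInverse.iterate (f := e.symm) (g := g.toFun) hr m) x
  have hit : ∀ m x, g.toFun^[m] (x + p) = g.toFun^[m] x + p := fun m x => by
    have := (g.lift ^ m).map_add_int x p
    rw [CircleDeg1Lift.coe_pow] at this
    exact this
  set A := e.symm^[n] a + p with hA
  set B := e.symm^[n] b + p with hB
  have hAB : A < B := by
    have := (e.symm.strictMono.iterate n) hab
    linarith
  have hHA : H A = H a - (n * α - p) := by
    rw [hA, deg1_add_int h1, semi_iter hsi]; ring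
  have hHB : H B = H a - (n * α - p) := by
    rw [hB, deg1_add_int h1, semi_iter hsi, hHab]; ring
  have hHmax : H (max b B) - H (min a A) = |n * α - p| := by
    rw [hH.map_max, hH.map_min, ← hHab, hHB, hHA, max_sub_min_eq_abs, abs_sub_comm]
    congr 1; ring
  have hxy : min a A ≤ max b B := (min_le_left _ _).trans (hab.le.trans (le_max_left _ _))
  have hD := lemD g.strictMono.monotone hH h1 hs hxy n (by rw [hHmax]; exact hp1)
    (by rw [hHmax]; exact hp)
  have hmono : ∀ i, StrictMono g.toFun^[i] := fun i => g.strictMono.iterate i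
  have slope : ∀ u v, u < v → ∃ ξ ∈ Ioo u v,
      Real.log (g.toFun v - g.toFun u) - Real.log (v - u) = Real.log (deriv g.toFun ξ) := by
    intro u v huv
    obtain ⟨ξ, hξ, hξ'⟩ := exists_hasDerivAt_eq_slope g.toFun _ huv g.continuous.continuousOn
      (fun x _ => g.hasDerivAt x)
    refine ⟨ξ, hξ, ?_⟩
    rw [hξ', Real.log_div (sub_pos.2 (g.strictMono huv)).ne' (sub_pos.2 huv).ne']
  set T : ℕ → ℝ := fun i => Real.log (g.toFun^[i] b - g.toFun^[i] a) with hT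
  set T' : ℕ → ℝ := fun i => Real.log (g.toFun^[i] B - g.toFun^[i] A) with hT'
  have hstep : ∀ i, -(L * (g.toFun^[i] (max b B) - g.toFun^[i] (min a A))) ≤
      (T (i + 1) - T i) - (T' (i + 1) - T' i) := by
    intro i
    obtain ⟨ξ, hξ, e1⟩ := slope _ _ (hmono i hab)
    obtain ⟨η, hη, e2⟩ := slope _ _ (hmono i hAB)
    have q1 := (hmono i).monotone (min_le_left a A)
    have q2 := (hmono i).monotone (min_le_right a A)
    have q3 := (hmono i).monotone (le_max_left b B)
    have q4 := (hmono i).monotone (le_max_right b B)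
    have hd : |ξ - η| ≤ g.toFun^[i] (max b B) - g.toFun^[i] (min a A) := by
      rw [abs_le]
      constructor <;> linarith [hξ.1, hξ.2, hη.1, hη.2]
    have := (hlip ξ η).trans (mul_le_mul_of_nonneg_left hd hL.le)
    simp only [hT, hT', Function.iterate_succ_apply']
    rw [e1, e2]
    exact (abs_le.1 this).1
  have hsum := Finset.sum_le_sum (s := Finset.range n) fun i _ => hstep i
  have hR : ∑ i ∈ Finset.range n, (T (i + 1) - T i - (T' (i + 1) - T' i)) =
      (T n - T 0) - (T' n - T' 0) := by
    rw [Finset.sum_sub_distrib (fun i => T (i + 1) - T i) (fun i => T' (i + 1) - T' i),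
      Finset.sum_range_sub, Finset.sum_range_sub]
  rw [Finset.sum_neg_distrib, ← Finset.mul_sum, hR] at hsum
  have hLs := mul_le_mul_of_nonneg_left hD hL.le
  have t0 : T 0 = Real.log (b - a) := rfl
  have tn : T' n = Real.log (b - a) := by
    simp only [hT', hA, hB, hit, hinv]
    congr 1; ring
  have t1 : T n < Real.log c := Real.log_lt_log (sub_pos.2 (hmono n hab)) l1
  have t2 : T' 0 < Real.log c := by
    refine Real.log_lt_log (sub_pos.2 hAB) ?_
    simp only [hA, hB, Function.iterate_zero, id]
    linarith
  have tc : Real.log c = Real.log (b - a) - L := by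
    rw [hc, Real.log_mul (sub_pos.2 hab).ne' (Real.exp_pos _).ne', Real.log_exp]; ring
  linarith

theorem exists_top_conj {g : CircleDiffeo} {α : ℝ} (hα : Irrational α)
    (h : g.lift.translationNumber = α) {L : ℝ} (hL : 0 < L)
    (hlip : ∀ x y, |Real.log (deriv g.toFun x) - Real.log (deriv g.toFun y)| ≤ L * |x - y|) :
    ∃ h0 : ℝ → ℝ, Continuous h0 ∧ StrictMono h0 ∧ (∀ x, h0 (x + 1) = h0 x + 1) ∧
      ∀ x, h0 (x + α) = g.toFun (h0 x) := by
  obtain ⟨H, hH, h1, hs⟩ := CircleDiffeo.exists_semiconj h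
  have hm := denjoy hα hL hlip hH h1 hs
  have hc := semi_continuous hα hH h1 hs
  have hsurj : Function.Surjective H :=
    (CircleDeg1Lift.continuous_iff_surjective (f := ⟨⟨H, hH⟩, h1⟩)).1 hc
  let e : ℝ ≃o ℝ := hm.orderIsoOfSurjective H hsurj
  have hr : ∀ x, H (e.symm x) = x := fun x => e.apply_symm_apply x
  refine ⟨e.symm, e.symm.continuous, e.symm.strictMono, fun x => ?_, fun x => ?_⟩
  · apply hm.injective
    rw [hr, h1, hr]
  · apply hm.injective
    rw [hr, hs, hr]

/-! ### Smoothing by averaging -/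

/-- Steklov average. -/
noncomputable def stek (u : ℝ → ℝ) (δ : ℝ) (x : ℝ) : ℝ := (∫ t in x..(x + δ), u t) / δ

theorem stek_hasDerivAt {u : ℝ → ℝ} (hu : Continuous u) (δ x : ℝ) :
    HasDerivAt (stek u δ) ((u (x + δ) - u x) / δ) x := by
  have hF : ∀ y, HasDerivAt (fun z => ∫ t in (0 : ℝ)..z, u t) (u y) y := fun y =>
    (hu.integral_hasStrictDerivAt 0 y).hasDerivAt
  have e : stek u δ = fun x => ((∫ t in (0 : ℝ)..(x + δ), u t) - ∫ t in (0 : ℝ)..x, u t) / δ := by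
    funext y
    unfold stek
    rw [intervalIntegral.integral_interval_sub_left] <;> exact hu.intervalIntegrable _ _
  rw [e]
  exact (((hF (x + δ)).comp_add_const x δ).sub (hF x)).div_const δ

theorem stek_deg1 {u : ℝ → ℝ} (hu : Continuous u) (h1 : ∀ x, u (x + 1) = u x + 1) {δ : ℝ}
    (hδ : 0 < δ) (x : ℝ) : stek u δ (x + 1) = stek u δ x + 1 := by
  unfold stek
  have e := intervalIntegral.integral_comp_add_right (a := x) (b := x + δ) u 1
  rw [show x + 1 + δ = x + δ + 1 by ring, ← e]
  simp only [h1]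
  rw [intervalIntegral.integral_add (hu.intervalIntegrable _ _) (by simp)]
  simp
  field_simp

theorem stek_ge {u : ℝ → ℝ} (hu : Continuous u) (hm : Monotone u) {δ : ℝ} (hδ : 0 < δ) (x : ℝ) :
    u x ≤ stek u δ x := by
  unfold stek
  rw [le_div_iff₀ hδ]
  have := intervalIntegral.integral_mono_on (μ := MeasureTheory.volume) (a := x) (b := x + δ)
    (f := fun _ => u x) (g := u) (by linarith) (by simp) (hu.intervalIntegrable _ _)
    (fun t ht => hm ht.1)
  simp at this
  linarith

theorem stek_le {u : ℝ → ℝ} (hu : Continuous u) (hm : Monotone u) {δ : ℝ} (hδ : 0 < δ) (x : ℝ) :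
    stek u δ x ≤ u (x + δ) := by
  unfold stek
  rw [div_le_iff₀ hδ]
  have := intervalIntegral.integral_mono_on (μ := MeasureTheory.volume) (a := x) (b := x + δ)
    (f := u) (g := fun _ => u (x + δ)) (by linarith) (hu.intervalIntegrable _ _) (by simp)
    (fun t ht => hm ht.2)
  simp at this
  linarith

theorem stek_diffeo {u : ℝ → ℝ} (hu : Continuous u) (hm : StrictMono u)
    (h1 : ∀ x, u (x + 1) = u x + 1) {δ : ℝ} (hδ : 0 < δ) :
    ∃ c : CircleDiffeo, c.toFun = stek u δ ∧ ∀ x, deriv c.toFun x = (u (x + δ) - u x) / δ :=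
  mkDiffeo _ _ (stek_hasDerivAt hu δ)
    (((hu.comp (continuous_add_const δ)).sub hu).div_const δ)
    (fun x => div_pos (sub_pos.2 (hm (by linarith))) hδ) (stek_deg1 hu h1 hδ)

theorem deg1_unif {F : ℝ → ℝ} (hc : Continuous F) (h1 : ∀ x, F (x + 1) = F x + 1)
    {ε : ℝ} (hε : 0 < ε) :
    ∃ δ : ℝ, 0 < δ ∧ δ < 1 ∧ ∀ x y, |x - y| < δ → |F x - F y| < ε := by
  obtain ⟨δ, h0, hlt, h⟩ := periodic_unif (φ := fun x => F x - x) (hc.sub continuous_id)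
    (fun x => by rw [h1]; ring) (half_pos hε)
  refine ⟨min δ (ε / 2), lt_min h0 (half_pos hε), (min_le_left _ _).trans_lt hlt,
    fun x y hxy => ?_⟩
  have a := h x y (hxy.trans_le (min_le_left _ _))
  have b := hxy.trans_le (min_le_right _ _)
  rw [abs_lt] at a b ⊢
  constructor <;> linarith

/-- Add a constant to a degree one lift. -/
noncomputable def shiftLift (U : CircleDeg1Lift) (t : ℝ) : CircleDeg1Lift :=
  ((CircleDeg1Lift.translate (Multiplicative.ofAdd t) : CircleDeg1Liftˣ) : CircleDeg1Lift) * U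

theorem shiftLift_apply (U : CircleDeg1Lift) (t x : ℝ) : shiftLift U t x = t + U x := by
  simp [shiftLift]

theorem rot_cont (U : CircleDeg1Lift) (hU : Continuous U) :
    Continuous fun t => (shiftLift U t).translationNumber := by
  have hcont : ∀ n : ℕ, Continuous fun t => (shiftLift U t ^ n) 0 := by
    intro n
    induction n with
    | zero => simpa using continuous_const
    | succ n ih =>
      simp only [pow_succ', CircleDeg1Lift.mul_apply, shiftLift_apply]
      exact continuous_id.add (hU.comp ih)
  have hunif : TendstoUniformly (fun (n : ℕ) t => (shiftLift U t ^ (n + 1)) 0 / ((n : ℝ) + 1))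
      (fun t => (shiftLift U t).translationNumber) atTop := by
    rw [Metric.tendstoUniformly_iff]
    intro ε hε
    obtain ⟨N, hN⟩ := exists_nat_one_div_lt hε
    filter_upwards [eventually_ge_atTop N] with n hn t
    have h1 := (shiftLift U t).dist_pow_map_zero_mul_translationNumber_le (n + 1)
    have hp : (0 : ℝ) < (n : ℝ) + 1 := by positivity
    rw [dist_comm, Real.dist_eq] at h1 ⊢
    refine lt_of_le_of_lt ?_ ((one_div_le_one_div_of_le (by positivity)
      (show (N : ℝ) + 1 ≤ n + 1 by gcongr)).trans_lt hN)
    rw [le_div_iff₀ hp, ← abs_of_pos hp, ← abs_mul, abs_of_pos hp]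
    rw [abs_sub_comm] at h1
    push_cast at h1
    rw [sub_mul, div_mul_cancel₀ _ hp.ne', mul_comm (CircleDeg1Lift.translationNumber _)]
    exact h1
  exact hunif.continuous (Frequently.of_forall fun n => (hcont (n + 1)).div_const _)

theorem abs_log_sub_le {m a b : ℝ} (hm : 0 < m) (ha : m ≤ a) (hb : m ≤ b) :
    |Real.log a - Real.log b| ≤ |a - b| / m := by
  have key : ∀ a b, m ≤ a → m ≤ b → Real.log a - Real.log b ≤ |a - b| / m := by
    intro a b ha hb
    have ha0 := hm.trans_le ha
    have hb0 := hm.trans_le hb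
    rw [← Real.log_div ha0.ne' hb0.ne']
    calc Real.log (a / b) ≤ a / b - 1 := Real.log_le_sub_one_of_pos (div_pos ha0 hb0)
      _ = (a - b) / b := by field_simp
      _ ≤ |a - b| / b := by gcongr; exact le_abs_self _
      _ ≤ |a - b| / m := by gcongr
  rw [abs_le]
  have h1 := key a b ha hb
  have h2 := key b a hb ha
  rw [abs_sub_comm] at h2
  constructor <;> linarith

theorem smooth_approx {g : CircleDiffeo} {α : ℝ} (h : g.lift.translationNumber = α)
    {ε : ℝ} (hε : 0 < ε) :
    ∃ G : CircleDiffeo, G.lift.translationNumber = α ∧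
      (∃ L, 0 < L ∧
        ∀ x y, |Real.log (deriv G.toFun x) - Real.log (deriv G.toFun y)| ≤ L * |x - y|) ∧
      (∀ x, |G.toFun x - g.toFun x| ≤ ε) ∧ ∀ x, |deriv G.toFun x - deriv g.toFun x| ≤ ε := by
  obtain ⟨δ1, h10, -, hδ1⟩ := deg1_unif g.continuous g.commute_translation hε
  obtain ⟨δ2, h20, -, hδ2⟩ := periodic_unif g.continuous_deriv g.deriv_periodic hε
  obtain ⟨C, hC0, hC⟩ := periodic_bdd g.continuous_log_deriv (fun x => by rw [g.deriv_periodic])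
  set δ := min δ1 δ2 / 2 with hδ
  have hmin : 0 < min δ1 δ2 := lt_min h10 h20
  have hδ0 : 0 < δ := by positivity
  have hd1 : δ < δ1 := by have := min_le_left δ1 δ2; linarith
  have hd2 : δ < δ2 := by have := min_le_right δ1 δ2; linarith
  obtain ⟨U, hU, hU'⟩ := stek_diffeo g.continuous g.strictMono g.commute_translation hδ0
  have hge : ∀ x, g.toFun x ≤ U.toFun x := fun x => by
    rw [hU]; exact stek_ge g.continuous g.strictMono.monotone hδ0 x
  have hle : ∀ x, U.toFun x ≤ g.toFun x + ε := fun x => by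
    rw [hU]
    have := stek_le g.continuous g.strictMono.monotone hδ0 x
    have h2 := (abs_lt.1 (hδ1 (x + δ) x (by rw [add_sub_cancel_left, abs_of_pos hδ0]; exact hd1))).2
    linarith
  have hcont := rot_cont U.lift U.continuous
  have hlo : (shiftLift U.lift (-ε)).translationNumber ≤ α := by
    rw [← h]
    refine CircleDeg1Lift.translationNumber_mono fun x => ?_
    show shiftLift U.lift (-ε) x ≤ g.toFun x
    rw [shiftLift_apply, CircleDiffeo.lift_apply]
    linarith [hle x]
  have hhi : α ≤ (shiftLift U.lift 0).translationNumber := by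
    rw [← h]
    refine CircleDeg1Lift.translationNumber_mono fun x => ?_
    show g.toFun x ≤ shiftLift U.lift 0 x
    rw [shiftLift_apply, CircleDiffeo.lift_apply]
    linarith [hge x]
  obtain ⟨t, ht, htα⟩ := intermediate_value_Icc (show -ε ≤ 0 by linarith) hcont.continuousOn
    ⟨hlo, hhi⟩
  obtain ⟨G, hG, hG'⟩ := mkDiffeo (fun x => t + U.toFun x) (deriv U.toFun)
    (fun x => (U.hasDerivAt x).const_add t) U.continuous_deriv U.deriv_pos
    (fun x => by rw [U.commute_translation]; ring)
  have hMV : ∀ a b, a < b → ∃ ξ ∈ Ioo a b, deriv g.toFun ξ = (g.toFun b - g.toFun a) / (b - a) :=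
    fun a b hab => exists_hasDerivAt_eq_slope g.toFun _ hab g.continuous.continuousOn
      (fun x _ => g.hasDerivAt x)
  have hslope : ∀ x, ∃ ξ ∈ Ioo x (x + δ), deriv G.toFun x = deriv g.toFun ξ := by
    intro x
    obtain ⟨ξ, hξ, e⟩ := hMV x (x + δ) (by linarith)
    refine ⟨ξ, hξ, ?_⟩
    rw [hG', hU', e]
    congr 1; ring
  have hup : ∀ x, deriv g.toFun x ≤ Real.exp C := fun x =>
    (Real.log_le_iff_le_exp (g.deriv_pos x)).1 (abs_le.1 (hC x)).2
  have hdown : ∀ x, Real.exp (-C) ≤ deriv g.toFun x := fun x =>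
    (Real.le_log_iff_exp_le (g.deriv_pos x)).1 (abs_le.1 (hC x)).1
  have hglip : ∀ x y, |g.toFun x - g.toFun y| ≤ Real.exp C * |x - y| := by
    intro x y
    have := (convex_univ : Convex ℝ (univ : Set ℝ)).norm_image_sub_le_of_norm_hasDerivWithin_le
      (f := g.toFun) (f' := deriv g.toFun) (C := Real.exp C)
      (fun y _ => (g.hasDerivAt y).hasDerivWithinAt)
      (fun y _ => by rw [Real.norm_eq_abs, abs_of_pos (g.deriv_pos y)]; exact hup y)
      (mem_univ y) (mem_univ x)
    simpa using this
  refine ⟨G, ?_, ⟨2 * Real.exp C / δ / Real.exp (-C), by positivity, ?_⟩, ?_, ?_⟩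
  · rw [← htα]
    congr 1
    ext x
    rw [shiftLift_apply, CircleDiffeo.lift_apply, CircleDiffeo.lift_apply, hG]
  · intro x y
    obtain ⟨ξ, _, e1⟩ := hslope x
    obtain ⟨η, _, e2⟩ := hslope y
    refine (abs_log_sub_le (Real.exp_pos (-C)) (by rw [e1]; exact hdown _)
      (by rw [e2]; exact hdown _)).trans ?_
    rw [div_mul_eq_mul_div]
    gcongr
    rw [hG', hG', hU', hU', ← sub_div, abs_div, abs_of_pos hδ0, div_mul_eq_mul_div]
    gcongr
    have b1 := hglip (x + δ) (y + δ)
    have b2 := hglip x y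
    rw [add_sub_add_right_eq_sub] at b1
    rw [abs_le] at b1 b2 ⊢
    constructor <;> linarith
  · intro x
    rw [hG, abs_le]
    constructor <;> linarith [ht.1, ht.2, hge x, hle x]
  · intro x
    obtain ⟨ξ, hξ, e1⟩ := hslope x
    rw [e1]
    refine (hδ2 ξ x ?_).le
    rw [abs_of_pos (by linarith [hξ.1])]
    linarith [hξ.2]

/-- **Theorem (Bonatti–Guelman).** For every irrational `α ∈ ℝ/ℤ` and every
`f ∈ F¹_α`, the `C¹`-conjugacy class of `f` is `C¹`-dense in `F¹_α` : for every
`g ∈ F¹_α` and every `ε > 0` there is a `C¹`-diffeomorphism `h` of `S¹` such that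
the conjugate `h∘f∘h⁻¹` (the circle diffeomorphism `fh` with `fh ∘ h = h ∘ f`)
is `ε`-`C¹`-close to `g`. -/
theorem conjugacy_class_dense (α : ℝ) (hα : Irrational α)
    (f g : CircleDiffeo) (hf : hasRotationNumber f α) (hg : hasRotationNumber g α)
    (ε : ℝ) (hε : 0 < ε) :
    ∃ h fh : CircleDiffeo, (∀ x : ℝ, fh.toFun (h.toFun x) = h.toFun (f.toFun x)) ∧
      distC1 fh.toFun g.toFun < ε := by
  have hf' := CircleDiffeo.translationNumber_lift hf
  have hg' := CircleDiffeo.translationNumber_lift hg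
  obtain ⟨G, hGα, ⟨L, hL, hlip⟩, hG0, hG1⟩ := smooth_approx hg' (show 0 < ε / 9 by positivity)
  obtain ⟨h0, hc, hm, h1, hs⟩ := exists_top_conj hα hGα hL hlip
  obtain ⟨C, hC0, hC⟩ := periodic_bdd g.continuous_deriv g.deriv_periodic
  obtain ⟨δg, hδg, -, hgu⟩ := periodic_unif g.continuous_deriv g.deriv_periodic
    (show 0 < ε / 9 by positivity)
  obtain ⟨δ', hδ', -, hu⟩ := deg1_unif hc h1 (show 0 < min δg (ε / 9) by positivity)
  have hδ : 0 < δ' / 2 := by positivity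
  set δ := δ' / 2 with hδdef
  have hosc : ∀ x, h0 (x + δ) - h0 x < min δg (ε / 9) := fun x =>
    (le_abs_self _).trans_lt (hu _ _ (by
      rw [add_sub_cancel_left, abs_of_pos hδ]; linarith))
  obtain ⟨h, hh, hh'⟩ := stek_diffeo hc hm h1 hδ
  have hlo : ∀ y, h0 y ≤ h.toFun y := fun y => by
    rw [hh]; exact stek_ge hc hm.monotone hδ y
  have hhi : ∀ y, h.toFun y ≤ h0 (y + δ) := fun y => by
    rw [hh]; exact stek_le hc hm.monotone hδ y
  have hs' : ∀ y, h0 (y + α + δ) = G.toFun (h0 (y + δ)) := fun y => by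
    rw [← hs]; congr 1; ring
  -- the maps are close
  have hA : ∀ y, |h.toFun (y + α) - G.toFun (h.toFun y)| ≤ ε / 9 := by
    intro y
    have a1 := hlo (y + α)
    have a2 := hhi (y + α)
    have a3 : G.toFun (h0 y) ≤ G.toFun (h.toFun y) := G.strictMono.monotone (hlo y)
    have a4 : G.toFun (h.toFun y) ≤ G.toFun (h0 (y + δ)) := G.strictMono.monotone (hhi y)
    rw [← hs] at a3
    rw [← hs'] at a4
    have a5 := (hosc (y + α)).trans_le (min_le_right _ _)
    rw [abs_le]
    constructor <;> linarith
  -- the derivatives are close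
  have hB : ∀ y, |deriv h.toFun (y + α) / deriv h.toFun y - deriv g.toFun (h.toFun y)| ≤
      2 * ε / 9 := by
    intro y
    have hlt : h0 y < h0 (y + δ) := hm (by linarith)
    obtain ⟨ξ, hξ, e⟩ := exists_hasDerivAt_eq_slope G.toFun _ hlt G.continuous.continuousOn
      (fun x _ => G.hasDerivAt x)
    have eQ : deriv h.toFun (y + α) / deriv h.toFun y = deriv G.toFun ξ := by
      rw [e, hh', hh', hs', hs, div_div_div_cancel_right₀ hδ.ne']
    have b1 := hG1 ξ
    have b2 := hgu ξ (h.toFun y) (by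
      have := (hosc y).trans_le (min_le_left _ _)
      have := hlo y
      have := hhi y
      rw [abs_lt]
      constructor <;> linarith [hξ.1, hξ.2])
    rw [eQ]
    have := abs_sub_le (deriv G.toFun ξ) (deriv g.toFun ξ) (deriv g.toFun (h.toFun y))
    linarith
  have hCε : 0 < C + ε := by linarith
  have hκ : 0 < min 1 (ε / (12 * (C + ε))) := by positivity
  set κ := min 1 (ε / (12 * (C + ε))) with hκdef
  have hκ1 : κ ≤ 1 := min_le_left _ _
  have hκ2 : (C + ε) * (2 * κ) ≤ ε / 6 := by
    have : κ ≤ ε / (12 * (C + ε)) := min_le_right _ _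
    rw [le_div_iff₀ (by positivity)] at this
    linarith
  obtain ⟨δ1, hδ1, -, hu1⟩ := periodic_unif (φ := fun y => Real.log (deriv h.toFun y))
    h.continuous_log_deriv (fun x => by rw [h.deriv_periodic]) (half_pos hκ)
  obtain ⟨δ2, hδ2, -, hu2⟩ := deg1_unif h.continuous h.commute_translation
    (show 0 < ε / 9 by positivity)
  have hε3 : 0 < min (min 1 (κ / 2)) (min (δ1 / 4) (δ2 / 4)) := by positivity
  set ε3 := min (min 1 (κ / 2)) (min (δ1 / 4) (δ2 / 4)) with hε3def
  have e31 : ε3 ≤ 1 := (min_le_left _ _).trans (min_le_left _ _)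
  have e32 : ε3 ≤ κ / 2 := (min_le_left _ _).trans (min_le_right _ _)
  have e33 : ε3 ≤ δ1 / 4 := (min_le_right _ _).trans (min_le_left _ _)
  have e34 : ε3 ≤ δ2 / 4 := (min_le_right _ _).trans (min_le_right _ _)
  have hexp : Real.exp ε3 - 1 ≤ 2 * ε3 := by
    have := Real.abs_exp_sub_one_le (x := ε3) (by rwa [abs_of_pos hε3])
    rw [abs_of_pos hε3] at this
    exact (le_abs_self _).trans this
  obtain ⟨k, r, hkr, hrlog, hr⟩ := CircleDiffeo.near_rotation hα hf' hε3
  obtain ⟨c, hc1, hc2⟩ := CircleDiffeo.exists_conj h r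
  obtain ⟨hk, hhk⟩ := CircleDiffeo.exists_comp h k
  have hfin0 : ∀ x, |c.toFun x - g.toFun x| ≤ ε / 3 := by
    intro x
    obtain ⟨y, rfl⟩ := h.surjective x
    have b1 := hu2 (r.toFun y) (y + α) (by linarith [hr y])
    have b2 := hA y
    have b3 := hG0 (h.toFun y)
    rw [hc1]
    have b4 := abs_sub_le (h.toFun (r.toFun y)) (h.toFun (y + α)) (g.toFun (h.toFun y))
    have b5 := abs_sub_le (h.toFun (y + α)) (G.toFun (h.toFun y)) (g.toFun (h.toFun y))
    linarith
  have hfin1 : ∀ x, |deriv c.toFun x - deriv g.toFun x| ≤ ε / 2 := by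
    intro x
    obtain ⟨y, rfl⟩ := h.surjective x
    have b1 := hu1 (r.toFun y) (y + α) (by linarith [hr y])
    have b2 := hrlog y
    have b3 := hB y
    set Q := deriv h.toFun (y + α) / deriv h.toFun y with hQ
    have hQ0 : 0 < Q := div_pos (h.deriv_pos _) (h.deriv_pos _)
    have hQC : Q ≤ C + ε := by
      have := (abs_le.1 b3).2
      have := (abs_le.1 (hC (h.toFun y))).2
      linarith
    set θ := Real.log (deriv h.toFun (r.toFun y)) - Real.log (deriv h.toFun (y + α)) +
      Real.log (deriv r.toFun y) with hθ
    have hθκ : |θ| ≤ κ := by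
      have := abs_add_le (Real.log (deriv h.toFun (r.toFun y)) - Real.log (deriv h.toFun (y + α)))
        (Real.log (deriv r.toFun y))
      rw [← hθ] at this
      linarith
    have hD : deriv c.toFun (h.toFun y) = Q * Real.exp θ := by
      rw [hc2, hθ, Real.exp_add, Real.exp_sub, Real.exp_log (h.deriv_pos _),
        Real.exp_log (h.deriv_pos _), Real.exp_log (r.deriv_pos _), hQ]
      have n1 := (h.deriv_pos y).ne'
      have n2 := (h.deriv_pos (y + α)).ne'
      field_simp
    have b4 := Real.abs_exp_sub_one_le (x := θ) (hθκ.trans hκ1)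
    have b5 : |Q * Real.exp θ - Q| ≤ ε / 6 := by
      rw [show Q * Real.exp θ - Q = Q * (Real.exp θ - 1) by ring, abs_mul, abs_of_pos hQ0]
      refine le_trans ?_ hκ2
      have : |Real.exp θ - 1| ≤ 2 * κ := b4.trans (by linarith)
      gcongr
    rw [hD]
    have b6 := abs_sub_le (Q * Real.exp θ) Q (deriv g.toFun (h.toFun y))
    linarith
  refine ⟨hk, c, fun x => ?_, ?_⟩
  · rw [hhk, hhk, hc1, hkr]
  · have : Nonempty (Icc (0 : ℝ) 1) := ⟨⟨0, by simp⟩⟩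
    unfold distC1
    have s1 : (⨆ x : Icc (0 : ℝ) 1, |c.toFun x.1 - g.toFun x.1|) ≤ ε / 3 :=
      ciSup_le fun x => hfin0 x.1
    have s2 : (⨆ x : Icc (0 : ℝ) 1, |deriv c.toFun x.1 - deriv g.toFun x.1|) ≤ ε / 2 :=
      ciSup_le fun x => hfin1 x.1
    linarith
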